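/- Let D ⊆ ℝ^N (N ≥ 2) be compact, m > 0 with C_m(D) nonempty, and let a_ij : D → ℝ be continuous functions forming a symmetric, uniformly positive definite matrix field on D. For Ω ∈ C_m(D) and k ≥ 1, define λ_k(Ω) = inf over all k-dimensional linear subspaces V of C_c^∞(Ω) of sup over nonzero u ∈ V of ( ∫_Ω Σ_{i,j} a_ij(x) ∂u/∂x_i ∂u/∂x_j dx ) / ( ∫_Ω u² dx ). Then for every k ≥ 1, λ_k : C_m(D) → ℝ is bounded and continuous with respect to uniform convergence: if Ω_n → Ω uniformly in C_m(D), then λ_k(Ω_n) → λ_k(Ω). -/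

import Mathlib

open MeasureTheory Metric Filter Topology

noncomputable section

/-- Uniform (Hausdorff) convergence of a sequence of sets. -/
def UnifConvTo {N : ℕ} (Ω : ℕ → Set (EuclideanSpace ℝ (Fin N)))
    (L : Set (EuclideanSpace ℝ (Fin N))) : Prop :=
  ∀ ε > (0 : ℝ), ∀ᶠ n in Filter.atTop,
    Ω n ⊆ Metric.thickening ε L ∧ L ⊆ Metric.thickening ε (Ω n)

/-- `Ω` belongs to the class `C_m(D)`: open convex subset of `D` of volume `m`. -/
def InCm {N : ℕ} (D : Set (EuclideanSpace ℝ (Fin N))) (m : ℝ)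
    (Ω : Set (EuclideanSpace ℝ (Fin N))) : Prop :=
  Ω ⊆ D ∧ IsOpen Ω ∧ Convex ℝ Ω ∧ volume Ω = ENNReal.ofReal m

/-- The Rayleigh quotient on `Ω` of the operator `-∂_i(a_ij(x) ∂_j ·)`. -/
def rayleighQuot {N : ℕ} (a : EuclideanSpace ℝ (Fin N) → Matrix (Fin N) (Fin N) ℝ)
    (Ω : Set (EuclideanSpace ℝ (Fin N))) (u : EuclideanSpace ℝ (Fin N) → ℝ) : ℝ :=
  (∫ x in Ω, ∑ i, ∑ j, a x i j *
      fderiv ℝ u x (EuclideanSpace.single i (1 : ℝ)) *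
      fderiv ℝ u x (EuclideanSpace.single j (1 : ℝ))) /
  (∫ x in Ω, u x ^ 2)

/-- The `k`-th Dirichlet eigenvalue of `-∂_i(a_ij(x) ∂_j ·)` on `Ω`, via Courant–Fischer
min-max over `k`-dimensional subspaces of test functions. -/
def lamk {N : ℕ} (a : EuclideanSpace ℝ (Fin N) → Matrix (Fin N) (Fin N) ℝ)
    (Ω : Set (EuclideanSpace ℝ (Fin N))) (k : ℕ) : ℝ :=
  sInf {μ : ℝ | ∃ V : Submodule ℝ (EuclideanSpace ℝ (Fin N) → ℝ),
    Module.finrank ℝ V = k ∧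
    (∀ u ∈ V, ContDiff ℝ (⊤ : ℕ∞) u ∧ HasCompactSupport u ∧ tsupport u ⊆ Ω) ∧
    μ = sSup {q : ℝ | ∃ u ∈ V, u ≠ 0 ∧ q = rayleighQuot a Ω u}}

/-!
Let two convex domains contain a common ball of centre `x₀` and radius `r`. If they are uniformly
closer than `δ r`, then the dilation of centre `x₀` and ratio `1 + δ` maps either of them onto a
superset of the other. Since dilating a domain divides its Rayleigh quotients by the square of the
ratio, and since the quadratic forms `a x` and `a y` are comparable up to a factor close to `1` when
`x` and `y` are close, monotonicity of `lamk` in the domain makes the ratio of the two eigenvalues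
close to `1`.

The lower bound for `lamk` is Poincaré's inequality. For the upper bound, the nonempty compact
subsets of `D` form a compact space, and near each of them all convex domains of volume at least `m`
contain a common ball; hence finitely many balls suffice, one of which each domain contains.
-/

section ConvexGeometry

variable {E : Type*} [NormedAddCommGroup E] [NormedSpace ℝ E] {A B S Ω : Set E} {x₀ : E} {r ε : ℝ}

lemma exists_norm_lt_and_lt_apply {f : E →L[ℝ] ℝ} {c ρ : ℝ} (hρ : 0 < ρ) (hc : c < ‖f‖ * ρ) :
    ∃ v, ‖v‖ < ρ ∧ c < f v := by
  obtain ⟨w, hw, hfw⟩ := f.exists_lt_apply_of_lt_opNorm ((div_lt_iff₀ hρ).2 hc)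
  obtain ⟨w', hw', hfw'⟩ : ∃ w', ‖w'‖ < 1 ∧ c / ρ < f w' := by
    rcases le_total 0 (f w) with hpos | hneg
    · exact ⟨w, hw, by rwa [Real.norm_of_nonneg hpos] at hfw⟩
    · exact ⟨-w, by rwa [norm_neg], by rwa [Real.norm_of_nonpos hneg, ← map_neg] at hfw⟩
  refine ⟨ρ • w', ?_, ?_⟩
  · rw [norm_smul, Real.norm_of_nonneg hρ.le]
    exact mul_lt_of_lt_one_right hρ hw'
  · rwa [map_smul, smul_eq_mul, ← div_lt_iff₀' hρ]

lemma ball_subset_of_ball_subset_thickening (hΩ : IsOpen Ω) (hconv : Convex ℝ Ω) (hε : 0 < ε)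
    (h : ball x₀ (r + ε) ⊆ thickening ε Ω) : ball x₀ r ⊆ Ω := by
  intro z hz
  by_contra hzΩ
  obtain ⟨f, hf⟩ := geometric_hahn_banach_open_point hconv hΩ hzΩ
  have hzr : ‖z - x₀‖ < r := mem_ball_iff_norm.1 hz
  obtain ⟨b, hb, -⟩ := mem_thickening_iff.1 (h (ball_subset_ball (by linarith) hz))
  have hf0 : 0 < ‖f‖ := norm_pos_iff.2 fun hf0 => by simpa [hf0] using hf b hb
  have hρ : 0 < ε + (r - ‖z - x₀‖) := by linarith
  obtain ⟨v, hv, hfv⟩ := exists_norm_lt_and_lt_apply hρ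
    (show ‖f‖ * ε < ‖f‖ * (ε + (r - ‖z - x₀‖)) by gcongr; linarith)
  have hzv : z + v ∈ ball x₀ (r + ε) := by
    rw [mem_ball_iff_norm, add_sub_right_comm]
    linarith [norm_add_le (z - x₀) v]
  obtain ⟨c, hc, hzvc⟩ := mem_thickening_iff.1 (h hzv)
  have hle : f (z + v) - f c ≤ ‖f‖ * dist (z + v) c := by
    rw [← map_sub, dist_eq_norm]
    exact (le_abs_self _).trans (f.le_opNorm _)
  have hlt : ‖f‖ * dist (z + v) c < ‖f‖ * ε := by gcongr
  rw [map_add] at hle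
  linarith [hf c hc]

open AffineMap in
lemma preimage_homothety_subset {δ : ℝ} (hB : Convex ℝ B) (hδ : 0 < δ)
    (hball : ball x₀ r ⊆ B) (hA : A ⊆ thickening (δ * r) B) :
    homothety x₀ (1 + δ) ⁻¹' A ⊆ B := by
  intro x hx
  obtain ⟨b, hb, hdist⟩ := mem_thickening_iff.1 (hA hx)
  set y := homothety x₀ (1 + δ) x with hy
  have hp : x₀ + δ⁻¹ • (y - b) ∈ B := by
    apply hball
    rw [mem_ball_iff_norm, add_sub_cancel_left, norm_smul, Real.norm_of_nonneg (by positivity),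
      inv_mul_lt_iff₀ hδ, ← dist_eq_norm]
    exact hdist
  have hcomb : x = (1 + δ)⁻¹ • b + (δ * (1 + δ)⁻¹) • (x₀ + δ⁻¹ • (y - b)) := by
    have : (1 + δ) • x = b + δ • (x₀ + δ⁻¹ • (y - b)) := by
      rw [smul_add, smul_inv_smul₀ hδ.ne', hy, homothety_apply, vsub_eq_sub, vadd_eq_add]
      module
    rw [mul_comm δ, mul_smul, ← smul_add, ← this, inv_smul_smul₀ (by positivity)]
  rw [hcomb]
  exact hB hb hp (by positivity) (by positivity) (by field_simp)

lemma convex_of_forall_exists_convex_near (hS : IsClosed S)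
    (h : ∀ ε > 0, ∃ C, Convex ℝ C ∧ C ⊆ thickening ε S ∧ S ⊆ thickening ε C) : Convex ℝ S := by
  intro x hx y hy s t hs ht hst
  rw [← hS.closure_eq, closure_eq_iInter_thickening]
  refine Set.mem_iInter₂.2 fun ε hε => ?_
  obtain ⟨C, hC, hCS, hSC⟩ := h (ε / 2) (half_pos hε)
  have hmem := hC.thickening (ε / 2) (hSC hx) (hSC hy) hs ht hst
  have hsub := (thickening_subset_of_subset (ε / 2) hCS).trans
    (thickening_thickening_subset (ε / 2) (ε / 2) S)
  rw [add_halves] at hsub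
  exact hsub hmem

end ConvexGeometry

section Measure

lemma le_measure_of_forall_exists_subset_thickening {X : Type*} [MetricSpace X] [ProperSpace X]
    [MeasurableSpace X] [OpensMeasurableSpace X] {μ : Measure X} [IsFiniteMeasureOnCompacts μ]
    {m : ENNReal} {K : Set X} (hK : IsCompact K)
    (h : ∀ ε > 0, ∃ C ⊆ thickening ε K, m ≤ μ C) : m ≤ μ K := by
  refine ge_of_tendsto (f := fun r => μ (cthickening r K)) (x := 𝓝[>] (0 : ℝ))
    ((tendsto_measure_cthickening_of_isCompact hK).mono_left nhdsWithin_le_nhds) ?_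
  filter_upwards [self_mem_nhdsWithin] with ε hε
  obtain ⟨C, hC, hmC⟩ := h ε hε
  exact hmC.trans (measure_mono (hC.trans (thickening_subset_cthickening ε K)))

lemma subset_thickening_of_dist_lt {X : Type*} [MetricSpace X] {ε : ℝ}
    {K L : TopologicalSpace.NonemptyCompacts X} (h : dist K L < ε) :
    (K : Set X) ⊆ thickening ε L := fun _ hx =>
  mem_thickening_iff.2 <| exists_dist_lt_of_hausdorffDist_lt hx h <|
    hausdorffEDist_ne_top_of_nonempty_of_bounded K.nonempty L.nonempty K.isCompact.isBounded
      L.isCompact.isBounded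

variable {E : Type*} [NormedAddCommGroup E] [NormedSpace ℝ E] [FiniteDimensional ℝ E]
  [MeasurableSpace E] [BorelSpace E] {μ : Measure E} [μ.IsAddHaarMeasure] {m : ENNReal}

lemma interior_nonempty_of_convex_of_measure_ne_zero {S : Set E} (hS : Convex ℝ S) (hμ : μ S ≠ 0) :
    (interior S).Nonempty := by
  contrapose! hμ
  refine measure_mono_null subset_closure ?_
  simpa [frontier, hμ] using hS.addHaar_frontier μ

variable (μ) in
lemma exists_ball_subset_of_near (hm : m ≠ 0) {K : Set E} (hK : IsCompact K) :
    ∃ x, ∃ r > 0, ∃ ε > 0, ∀ Ω, IsOpen Ω → Convex ℝ Ω → m ≤ μ Ω →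
      Ω ⊆ thickening ε K → K ⊆ thickening ε Ω → ball x r ⊆ Ω := by
  -- Either `K` is a limit of such `Ω`, hence convex of measure at least `m`, or none is near `K`.
  by_cases happrox : ∀ ε > 0, ∃ Ω, Convex ℝ Ω ∧ m ≤ μ Ω ∧ Ω ⊆ thickening ε K ∧ K ⊆ thickening ε Ω
  · have hconv : Convex ℝ K := convex_of_forall_exists_convex_near hK.isClosed fun ε hε =>
      let ⟨Ω, hΩ, _, hΩK, hKΩ⟩ := happrox ε hε
      ⟨Ω, hΩ, hΩK, hKΩ⟩
    have hmK : m ≤ μ K := le_measure_of_forall_exists_subset_thickening hK fun ε hε =>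
      let ⟨Ω, _, hmΩ, hΩK, _⟩ := happrox ε hε
      ⟨Ω, hΩK, hmΩ⟩
    obtain ⟨x, hx⟩ := interior_nonempty_of_convex_of_measure_ne_zero hconv
      (hm.bot_lt.trans_le hmK).ne'
    obtain ⟨r, hr, hball⟩ := isOpen_iff.1 isOpen_interior x hx
    refine ⟨x, r / 2, half_pos hr, r / 2, half_pos hr, fun Ω hΩ hΩconv _ _ hKΩ => ?_⟩
    refine ball_subset_of_ball_subset_thickening hΩ hΩconv (half_pos hr) ?_
    rw [add_halves]
    exact hball.trans (interior_subset.trans hKΩ)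
  · push Not at happrox
    obtain ⟨ε, hε, hfar⟩ := happrox
    exact ⟨0, 1, one_pos, ε, hε, fun Ω _ hconv hmΩ hΩK hKΩ => absurd hKΩ (hfar Ω hconv hmΩ hΩK)⟩

open TopologicalSpace in
variable (μ) in
theorem exists_finite_balls_of_isCompact (hm : m ≠ 0) {D : Set E} (hD : IsCompact D) :
    ∃ F : Set (E × ℝ), F.Finite ∧ (∀ p ∈ F, 0 < p.2) ∧
      ∀ Ω ⊆ D, IsOpen Ω → Convex ℝ Ω → m ≤ μ Ω → ∃ p ∈ F, ball p.1 p.2 ⊆ Ω := by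
  choose x r hr ε hε hball using fun K : NonemptyCompacts E =>
    exists_ball_subset_of_near μ hm K.isCompact
  obtain ⟨T, -, hT⟩ := (NonemptyCompacts.isCompact_subsets_of_isCompact hD).elim_nhds_subcover
    (fun K => ball K (ε K)) fun K _ => ball_mem_nhds K (hε K)
  refine ⟨(fun K => (x K, r K)) '' T, T.finite_toSet.image _, ?_, fun Ω hΩD hΩ hconv hmΩ => ?_⟩
  · rintro _ ⟨K, -, rfl⟩
    exact hr K
  have hne : Ω.Nonempty := nonempty_of_measure_ne_zero (hm.bot_lt.trans_le hmΩ).ne'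
  let L : NonemptyCompacts E := ⟨⟨closure Ω, hD.closure_of_subset hΩD⟩, hne.closure⟩
  have hLD : (L : Set E) ⊆ D := closure_minimal hΩD hD.isClosed
  obtain ⟨K, hKT, hLK⟩ := Set.mem_iUnion₂.1 (hT hLD)
  refine ⟨_, ⟨K, hKT, rfl⟩, hball K Ω hΩ hconv hmΩ ?_ ?_⟩
  · exact subset_closure.trans (subset_thickening_of_dist_lt hLK)
  · rw [← thickening_closure]
    exact subset_thickening_of_dist_lt (L := L) (mem_ball'.1 hLK)

end Measure

section TestFunctions

variable {E : Type*} [NormedAddCommGroup E] [NormedSpace ℝ E] {A B Ω : Set E} {u : E → ℝ}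

/-- The space `C_c^∞(Ω)` of test functions, realised inside the space of all functions `E → ℝ`. -/
def testFunctions (Ω : Set E) : Submodule ℝ (E → ℝ) where
  carrier := {u | ContDiff ℝ (⊤ : ℕ∞) u ∧ HasCompactSupport u ∧ tsupport u ⊆ Ω}
  zero_mem' := ⟨contDiff_const, .zero, by
    rw [tsupport_eq_empty_iff.2 rfl]
    exact Set.empty_subset Ω⟩
  add_mem' {u v} hu hv :=
    ⟨hu.1.add hv.1, hu.2.1.add hv.2.1, (tsupport_add u v).trans (Set.union_subset hu.2.2 hv.2.2)⟩
  smul_mem' c u hu := ⟨contDiff_const.smul hu.1, hu.2.1.smul_left (f := fun _ => c),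
    (closure_mono (Function.support_const_smul_subset c u)).trans hu.2.2⟩

lemma testFunctions_mono (h : A ⊆ B) : testFunctions A ≤ testFunctions B :=
  fun _ hu => ⟨hu.1, hu.2.1, hu.2.2.trans h⟩

lemma differentiable_of_mem_testFunctions (hu : u ∈ testFunctions Ω) : Differentiable ℝ u :=
  hu.1.differentiable (by simp)

lemma fderiv_apply_mem_testFunctions (hu : u ∈ testFunctions Ω) (v : E) :
    (fun x => fderiv ℝ u x v) ∈ testFunctions Ω :=
  ⟨(hu.1.fderiv_right (by simp)).clm_apply contDiff_const, hu.2.1.fderiv_apply ℝ v,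
    (tsupport_fderiv_apply_subset ℝ v).trans hu.2.2⟩

lemma hasCompactSupport_sq_of_mem_testFunctions (hu : u ∈ testFunctions Ω) :
    HasCompactSupport fun x => u x ^ 2 :=
  hu.2.1.comp_left (g := fun y : ℝ => y ^ 2) (zero_pow two_ne_zero)

lemma comp_mem_testFunctions (hu : u ∈ testFunctions Ω) (φ : E ≃ₜ E) (hφ : ContDiff ℝ (⊤ : ℕ∞) φ) :
    u ∘ φ ∈ testFunctions (φ ⁻¹' Ω) :=
  ⟨hu.1.comp hφ, hu.2.1.comp_homeomorph φ, by
    rw [tsupport_comp_eq_preimage]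
    exact Set.preimage_mono hu.2.2⟩

lemma exists_mem_testFunctions_apply_eq_one [FiniteDimensional ℝ E] (hΩ : IsOpen Ω) {x : E}
    (hx : x ∈ Ω) {P : Set E} (hP : P.Finite) (hxP : x ∉ P) :
    ∃ u ∈ testFunctions Ω, u x = 1 ∧ ∀ y ∈ P, u y = 0 := by
  obtain ⟨u, hsupp, hcpt, hsmooth, -, hux⟩ := exists_contDiff_tsupport_subset (n := ⊤)
    ((hΩ.inter hP.isClosed.isOpen_compl).mem_nhds ⟨hx, hxP⟩)
  exact ⟨u, ⟨hsmooth, hcpt, hsupp.trans Set.inter_subset_left⟩, hux, fun y hy =>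
    image_eq_zero_of_notMem_tsupport fun hyu => (hsupp hyu).2 hy⟩

theorem exists_le_testFunctions_finrank_eq [FiniteDimensional ℝ E] [Nontrivial E] (hΩ : IsOpen Ω)
    (hne : Ω.Nonempty) (k : ℕ) : ∃ V ≤ testFunctions Ω, Module.finrank ℝ V = k := by
  obtain ⟨z, hz⟩ := hne
  have : NeBot (𝓝[≠] z) := Module.punctured_nhds_neBot ℝ E z
  have hinf : Ω.Infinite := infinite_of_mem_nhds z (hΩ.mem_nhds hz)
  obtain ⟨p, hpΩ⟩ : ∃ p : Fin k ↪ E, ∀ j, p j ∈ Ω :=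
    ⟨Fin.valEmbedding.trans ((hinf.natEmbedding Ω).trans (.subtype _)), fun j => Subtype.prop _⟩
  choose f hf hone hzero using fun j => exists_mem_testFunctions_apply_eq_one hΩ (hpΩ j)
    (Set.toFinite (p '' {j}ᶜ)) (by simp)
  have hlin : LinearIndependent ℝ f := by
    refine Fintype.linearIndependent_iff.2 fun g hg i => ?_
    have hgi := congrFun hg (p i)
    rw [Finset.sum_apply, Finset.sum_eq_single_of_mem i (Finset.mem_univ i)] at hgi
    · simpa [hone] using hgi
    · intro j _ hj
      simp [hzero j (p i) ⟨i, hj.symm, rfl⟩]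
  exact ⟨Submodule.span ℝ (Set.range f), Submodule.span_le.2 (Set.range_subset_iff.2 hf),
    by rw [finrank_span_eq_card hlin, Fintype.card_fin]⟩

section Integral

variable [MeasurableSpace E] [BorelSpace E] {μ : Measure E} [IsFiniteMeasureOnCompacts μ]

lemma memLp_two_of_mem_testFunctions (hu : u ∈ testFunctions Ω) : MemLp u 2 μ :=
  hu.1.continuous.memLp_of_hasCompactSupport hu.2.1

lemma integrable_sq_of_mem_testFunctions (hu : u ∈ testFunctions Ω) :
    Integrable (fun x => u x ^ 2) μ :=
  (memLp_two_of_mem_testFunctions hu).integrable_sq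

lemma integrable_mul_mul_fderiv (hu : u ∈ testFunctions Ω) (v : E) (ℓ : E →L[ℝ] ℝ) :
    Integrable (fun x => ℓ x * (2 * u x * fderiv ℝ u x v)) μ := by
  have hu_cont := hu.1.continuous
  have hderiv := (fderiv_apply_mem_testFunctions hu v).1.continuous
  refine Continuous.integrable_of_hasCompactSupport (by fun_prop) ?_
  exact (hu.2.1.mul_left (f := fun _ => 2)).mul_right.mul_left

lemma integral_sq_pos_of_mem_testFunctions [μ.IsOpenPosMeasure] (hu : u ∈ testFunctions Ω)
    (hu0 : u ≠ 0) : 0 < ∫ x, u x ^ 2 ∂μ := by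
  obtain ⟨x, hx⟩ := Function.ne_iff.1 hu0
  exact (hu.1.continuous.pow 2).integral_pos_of_hasCompactSupport_nonneg_nonzero
    (hasCompactSupport_sq_of_mem_testFunctions hu) (fun x => sq_nonneg (u x)) (pow_ne_zero 2 hx)

variable (Ω μ) in
/-- The inclusion of `C_c^∞(Ω)` into `L²(μ)`; through it `∫ u²` is the square of a norm. -/
def testFunctionsToL2 : testFunctions Ω →ₗ[ℝ] Lp ℝ 2 μ where
  toFun u := (memLp_two_of_mem_testFunctions u.2).toLp u
  map_add' u v := MemLp.toLp_add (memLp_two_of_mem_testFunctions u.2)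
    (memLp_two_of_mem_testFunctions v.2)
  map_smul' c u := MemLp.toLp_const_smul c (memLp_two_of_mem_testFunctions u.2)

lemma testFunctionsToL2_apply (u : testFunctions Ω) :
    testFunctionsToL2 Ω μ u = (memLp_two_of_mem_testFunctions u.2).toLp u := rfl

lemma norm_testFunctionsToL2_sq (u : testFunctions Ω) :
    ‖testFunctionsToL2 Ω μ u‖ ^ 2 = ∫ x, (u : E → ℝ) x ^ 2 ∂μ := by
  rw [← real_inner_self_eq_norm_sq, L2.inner_def]
  refine integral_congr_ae ?_
  filter_upwards [(memLp_two_of_mem_testFunctions u.2).coeFn_toLp] with x hx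
  rw [testFunctionsToL2_apply, hx, real_inner_self_eq_norm_sq, Real.norm_eq_abs, sq_abs]

lemma testFunctionsToL2_injective [μ.IsOpenPosMeasure] :
    Function.Injective (testFunctionsToL2 Ω μ) := by
  refine (injective_iff_map_eq_zero _).2 fun u hu => Subtype.ext ?_
  by_contra hu0
  have := integral_sq_pos_of_mem_testFunctions (μ := μ) u.2 hu0
  simp [← norm_testFunctionsToL2_sq, hu] at this

end Integral

end TestFunctions

lemma exists_forall_apply_self_le_mul_norm_sq {V H : Type*} [AddCommGroup V] [Module ℝ V]
    [FiniteDimensional ℝ V] [NormedAddCommGroup H] [NormedSpace ℝ H] {T : V →ₗ[ℝ] H}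
    (hT : Function.Injective T) (B : V →ₗ[ℝ] V →ₗ[ℝ] ℝ) : ∃ C, ∀ v, B v v ≤ C * ‖T v‖ ^ 2 := by
  let _ : NormedAddCommGroup V := .induced V H T hT
  let _ : NormedSpace ℝ V := .induced ℝ V H T
  refine ⟨‖B.toContinuousBilinearMap‖, fun v => ?_⟩
  rw [sq, ← mul_assoc]
  exact (le_abs_self _).trans (B.toContinuousBilinearMap.le_opNorm₂ v v)

section Poincare

variable {E : Type*} [NormedAddCommGroup E] [NormedSpace ℝ E] [FiniteDimensional ℝ E]
  [MeasurableSpace E] [BorelSpace E] {μ : Measure E} [μ.IsAddHaarMeasure]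
  {Ω : Set E} {u : E → ℝ} {v : E} {ℓ : E →L[ℝ] ℝ}

lemma integral_sq_eq_neg_integral_mul_fderiv (hu : u ∈ testFunctions Ω) (hv : ℓ v = 1) :
    ∫ x, u x ^ 2 ∂μ = -∫ x, ℓ x * (2 * u x * fderiv ℝ u x v) ∂μ := by
  have hsq : ∀ x, HasFDerivAt (fun x => u x ^ 2) ((2 * u x) • fderiv ℝ u x) x := fun x => by
    simpa using (differentiable_of_mem_testFunctions hu x).hasFDerivAt.pow 2
  have hℓu : Integrable (fun x => ℓ x * u x ^ 2) μ :=
    (ℓ.continuous.mul (hu.1.continuous.pow 2)).integrable_of_hasCompactSupport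
      (hasCompactSupport_sq_of_mem_testFunctions hu).mul_left
  have hparts := integral_mul_fderiv_eq_neg_fderiv_mul_of_integrable (μ := μ)
    (f := ℓ) (g := fun x => u x ^ 2) (v := v)
    (by simpa [hv] using integrable_sq_of_mem_testFunctions hu)
    (by simpa [(hsq _).fderiv] using integrable_mul_mul_fderiv hu v ℓ) hℓu
    (fun x _ => ℓ.differentiableAt) (fun x _ => (hsq x).differentiableAt)
  simp only [(hsq _).fderiv, ContinuousLinearMap.fderiv, hv, one_mul, smul_apply,
    smul_eq_mul] at hparts
  rw [hparts, neg_neg]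

theorem integral_sq_le_integral_fderiv_sq (hu : u ∈ testFunctions Ω) (hv : ℓ v = 1) {R : ℝ}
    (hR : ∀ x ∈ Ω, |ℓ x| ≤ R) :
    ∫ x, u x ^ 2 ∂μ ≤ 4 * R ^ 2 * ∫ x, fderiv ℝ u x v ^ 2 ∂μ := by
  have hu_int := integrable_sq_of_mem_testFunctions (μ := μ) hu
  have hdu_int := integrable_sq_of_mem_testFunctions (μ := μ) (fderiv_apply_mem_testFunctions hu v)
  have hpointwise (x : E) :
      -(ℓ x * (2 * u x * fderiv ℝ u x v)) ≤ 2⁻¹ * u x ^ 2 + 2 * R ^ 2 * fderiv ℝ u x v ^ 2 := by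
    by_cases hx : x ∈ tsupport u
    · have hℓ : ℓ x ^ 2 * fderiv ℝ u x v ^ 2 ≤ R ^ 2 * fderiv ℝ u x v ^ 2 :=
        mul_le_mul_of_nonneg_right (sq_le_sq' (abs_le.1 (hR x (hu.2.2 hx))).1
          (abs_le.1 (hR x (hu.2.2 hx))).2) (sq_nonneg _)
      nlinarith [sq_nonneg (u x + 2 * (ℓ x * fderiv ℝ u x v))]
    · rw [image_eq_zero_of_notMem_tsupport hx]
      simp only [mul_zero, zero_mul, neg_zero]
      positivity
  have hhalf : ∫ x, u x ^ 2 ∂μ ≤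
      2⁻¹ * ∫ x, u x ^ 2 ∂μ + 2 * R ^ 2 * ∫ x, fderiv ℝ u x v ^ 2 ∂μ := by
    calc ∫ x, u x ^ 2 ∂μ = ∫ x, -(ℓ x * (2 * u x * fderiv ℝ u x v)) ∂μ := by
          rw [integral_sq_eq_neg_integral_mul_fderiv hu hv, integral_neg]
      _ ≤ ∫ x, (2⁻¹ * u x ^ 2 + 2 * R ^ 2 * fderiv ℝ u x v ^ 2) ∂μ :=
          integral_mono (integrable_mul_mul_fderiv hu v ℓ).neg
            ((hu_int.const_mul _).add (hdu_int.const_mul _)) hpointwise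
      _ = _ := by
          rw [integral_add (hu_int.const_mul _) (hdu_int.const_mul _), integral_const_mul,
            integral_const_mul]
  linarith

end Poincare

section Homothety

variable {E : Type*} [NormedAddCommGroup E] [NormedSpace ℝ E]

/-- The homothety of centre `x₀` and ratio `t ≠ 0`, as a homeomorphism, used to change variables
in Rayleigh quotients. -/
def homothetyHomeomorph (x₀ : E) {t : ℝ} (ht : t ≠ 0) : E ≃ₜ E where
  toFun := AffineMap.homothety x₀ t
  invFun := AffineMap.homothety x₀ t⁻¹
  left_inv x := by simp [AffineMap.homothety_apply, smul_smul, ht]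
  right_inv x := by simp [AffineMap.homothety_apply, smul_smul, ht]
  continuous_toFun := AffineMap.homothety_continuous x₀ _
  continuous_invFun := AffineMap.homothety_continuous x₀ _

lemma coe_homothetyHomeomorph (x₀ : E) {t : ℝ} (ht : t ≠ 0) :
    ⇑(homothetyHomeomorph x₀ ht) = AffineMap.homothety x₀ t := rfl

lemma hasFDerivAt_homothety (x₀ : E) (t : ℝ) (x : E) :
    HasFDerivAt (AffineMap.homothety x₀ t) (t • ContinuousLinearMap.id ℝ E) x :=
  (((hasFDerivAt_id x).sub_const x₀).const_smul t).add_const x₀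

lemma contDiff_homothety (x₀ : E) (t : ℝ) {n : WithTop ℕ∞} :
    ContDiff ℝ n (AffineMap.homothety x₀ t) :=
  ((contDiff_id.sub contDiff_const).const_smul t).add contDiff_const

lemma integral_comp_homothety [FiniteDimensional ℝ E] [MeasurableSpace E] [BorelSpace E]
    {μ : Measure E} [μ.IsAddHaarMeasure] {F : Type*} [NormedAddCommGroup F] [NormedSpace ℝ F]
    (f : E → F) (x₀ : E) (t : ℝ) :
    ∫ x, f (AffineMap.homothety x₀ t x) ∂μ = |(t ^ Module.finrank ℝ E)⁻¹| • ∫ x, f x ∂μ := by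
  have hφ (x : E) : AffineMap.homothety x₀ t x = t • x + (x₀ - t • x₀) := by
    rw [AffineMap.homothety_apply, vsub_eq_sub, vadd_eq_add]
    module
  simp only [hφ]
  rw [Measure.integral_comp_smul μ (fun y => f (y + (x₀ - t • x₀))), integral_add_right_eq_self]

end Homothety

section Energy

open scoped Matrix

lemma dotProduct_mulVec_self_eq_sum {ι : Type*} [Fintype ι] (A : Matrix ι ι ℝ) (ξ : ι → ℝ) :
    ξ ⬝ᵥ A *ᵥ ξ = ∑ i, ∑ j, A i j * ξ i * ξ j := by
  simp only [dotProduct, Matrix.mulVec, Finset.mul_sum]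
  exact Finset.sum_congr rfl fun i _ => Finset.sum_congr rfl fun j _ => by ring

variable {N : ℕ} {a b : EuclideanSpace ℝ (Fin N) → Matrix (Fin N) (Fin N) ℝ}
  {u v : EuclideanSpace ℝ (Fin N) → ℝ} {Ω : Set (EuclideanSpace ℝ (Fin N))}
  {x x₀ : EuclideanSpace ℝ (Fin N)} {κ t : ℝ}

/-- The ellipticity bound `ν |ξ|² ≤ a_ij(x) ξ_i ξ_j` for all `x ∈ D`, by which `energy a` dominates
`ν ∫ |∇u|²`. -/
def EllipticOn {X : Type*} (a : X → Matrix (Fin N) (Fin N) ℝ) (ν : ℝ) (D : Set X) : Prop :=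
  ∀ x ∈ D, ∀ ξ : Fin N → ℝ, ν * (ξ ⬝ᵥ ξ) ≤ ξ ⬝ᵥ a x *ᵥ ξ

lemma EllipticOn.mono {X : Type*} {a : X → Matrix (Fin N) (Fin N) ℝ} {ν : ℝ} {A B : Set X}
    (hell : EllipticOn a ν B) (h : A ⊆ B) : EllipticOn a ν A := fun x hx => hell x (h hx)

/-- The vector of partial derivatives of `u` at `x`, as a plain tuple on which the coefficient
matrix acts. -/
def partials (u : EuclideanSpace ℝ (Fin N) → ℝ) (x : EuclideanSpace ℝ (Fin N)) : Fin N → ℝ :=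
  fun i => fderiv ℝ u x (EuclideanSpace.single i (1 : ℝ))

/-- The Dirichlet energy `∫ a_ij ∂_i u ∂_j u`. The integral is over the whole space; for
`u ∈ C_c^∞(Ω)` it equals the integral over `Ω`. -/
def energy (a : EuclideanSpace ℝ (Fin N) → Matrix (Fin N) (Fin N) ℝ)
    (u : EuclideanSpace ℝ (Fin N) → ℝ) : ℝ :=
  ∫ x, partials u x ⬝ᵥ a x *ᵥ partials u x

lemma continuous_partials (hu : u ∈ testFunctions Ω) : Continuous (partials u) :=
  continuous_pi fun _ => (fderiv_apply_mem_testFunctions hu _).1.continuous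

lemma partials_eq_zero_of_notMem_tsupport (hx : x ∉ tsupport u) : partials u x = 0 := by
  funext i
  exact image_eq_zero_of_notMem_tsupport
    (f := fun x => fderiv ℝ u x (EuclideanSpace.single i (1 : ℝ)))
    fun h => hx (tsupport_fderiv_apply_subset ℝ _ h)

lemma partials_add (hu : u ∈ testFunctions Ω) (hv : v ∈ testFunctions Ω) :
    partials (u + v) x = partials u x + partials v x := by
  funext i
  simp only [partials, Pi.add_apply, fderiv_add (differentiable_of_mem_testFunctions hu x)
    (differentiable_of_mem_testFunctions hv x), add_apply]

lemma partials_smul (c : ℝ) (hu : u ∈ testFunctions Ω) :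
    partials (c • u) x = c • partials u x := by
  funext i
  simp only [partials, Pi.smul_apply, fderiv_const_smul (differentiable_of_mem_testFunctions hu x),
    smul_apply]

lemma partials_comp_homothety (hu : u ∈ testFunctions Ω) :
    partials (u ∘ AffineMap.homothety x₀ t) x = t • partials u (AffineMap.homothety x₀ t x) := by
  funext i
  have h := (differentiable_of_mem_testFunctions hu _).hasFDerivAt.comp x
    (hasFDerivAt_homothety x₀ t x)
  simp [partials, h.fderiv]

lemma integrable_partials_dotProduct_mulVec (ha : ContinuousOn a Ω) (hu : u ∈ testFunctions Ω)
    (hv : v ∈ testFunctions Ω) : Integrable fun x => partials u x ⬝ᵥ a x *ᵥ partials v x := by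
  have hform : Continuous fun p : (Fin N → ℝ) × Matrix (Fin N) (Fin N) ℝ × (Fin N → ℝ) =>
      p.1 ⬝ᵥ p.2.1 *ᵥ p.2.2 := by fun_prop
  have hcont : ContinuousOn (fun x => partials u x ⬝ᵥ a x *ᵥ partials v x) (tsupport u) :=
    hform.comp_continuousOn ((continuous_partials hu).continuousOn.prodMk
      ((ha.mono hu.2.2).prodMk (continuous_partials hv).continuousOn))
  refine (integrableOn_iff_integrable_of_support_subset fun x hx => ?_).1
    (hcont.integrableOn_compact hu.2.1)
  by_contra hxu
  exact hx (by simp [partials_eq_zero_of_notMem_tsupport hxu])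

/-- The bilinear form on `C_c^∞(Ω)` whose diagonal is `energy a`. -/
def energyForm (ha : ContinuousOn a Ω) : testFunctions Ω →ₗ[ℝ] testFunctions Ω →ₗ[ℝ] ℝ :=
  LinearMap.mk₂ ℝ (fun u v => ∫ x, partials u x ⬝ᵥ a x *ᵥ partials v x)
    (fun u u' v => by
      simp only [Submodule.coe_add, partials_add u.2 u'.2, add_dotProduct]
      exact integral_add (integrable_partials_dotProduct_mulVec ha u.2 v.2)
        (integrable_partials_dotProduct_mulVec ha u'.2 v.2))
    (fun c u v => by
      simp only [Submodule.coe_smul, partials_smul c u.2, smul_dotProduct]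
      exact integral_smul c _)
    (fun u v v' => by
      simp only [Submodule.coe_add, partials_add v.2 v'.2, Matrix.mulVec_add, dotProduct_add]
      exact integral_add (integrable_partials_dotProduct_mulVec ha u.2 v.2)
        (integrable_partials_dotProduct_mulVec ha u.2 v'.2))
    (fun c u v => by
      simp only [Submodule.coe_smul, partials_smul c v.2, Matrix.mulVec_smul, dotProduct_smul]
      exact integral_smul c _)

lemma rayleighQuot_eq_energy_div (a : EuclideanSpace ℝ (Fin N) → Matrix (Fin N) (Fin N) ℝ)
    (hu : u ∈ testFunctions Ω) : rayleighQuot a Ω u = energy a u / ∫ x, u x ^ 2 := by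
  have hout (x) (hx : x ∉ Ω) : x ∉ tsupport u := fun hxu => hx (hu.2.2 hxu)
  rw [rayleighQuot, energy]
  congr 1
  · simp only [dotProduct_mulVec_self_eq_sum]
    refine setIntegral_eq_integral_of_forall_compl_eq_zero (f := fun x => ∑ i, ∑ j,
      a x i j * partials u x i * partials u x j) fun x hx => ?_
    simp [partials_eq_zero_of_notMem_tsupport (hout x hx)]
  · refine setIntegral_eq_integral_of_forall_compl_eq_zero fun x hx => ?_
    rw [image_eq_zero_of_notMem_tsupport (hout x hx), sq, mul_zero]

lemma energy_le_mul_energy (ha : ContinuousOn a Ω) (hb : ContinuousOn b Ω)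
    (hab : ∀ x ∈ Ω, ∀ ξ, ξ ⬝ᵥ b x *ᵥ ξ ≤ κ * (ξ ⬝ᵥ a x *ᵥ ξ)) (hu : u ∈ testFunctions Ω) :
    energy b u ≤ κ * energy a u := by
  rw [energy, energy, ← integral_const_mul]
  refine integral_mono (integrable_partials_dotProduct_mulVec hb hu hu)
    ((integrable_partials_dotProduct_mulVec ha hu hu).const_mul κ) fun x => ?_
  by_cases hx : x ∈ tsupport u
  · exact hab x (hu.2.2 hx) _
  · simp [partials_eq_zero_of_notMem_tsupport hx]

lemma EllipticOn.energy_nonneg {ν : ℝ} (hν : 0 ≤ ν) (hell : EllipticOn a ν Ω)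
    (hu : u ∈ testFunctions Ω) : 0 ≤ energy a u := by
  refine integral_nonneg fun x => ?_
  by_cases hx : x ∈ tsupport u
  · exact (mul_nonneg hν (Finset.sum_nonneg fun i _ => mul_self_nonneg _)).trans
      (hell x (hu.2.2 hx) _)
  · simp [partials_eq_zero_of_notMem_tsupport hx]

lemma energy_comp_homothety (a : EuclideanSpace ℝ (Fin N) → Matrix (Fin N) (Fin N) ℝ)
    (ht : t ≠ 0) (hu : u ∈ testFunctions Ω) :
    energy a (u ∘ homothetyHomeomorph x₀ ht) =
      t ^ 2 * (|(t ^ N)⁻¹| * energy (a ∘ (homothetyHomeomorph x₀ ht).symm) u) := by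
  have hscale := integral_comp_homothety (μ := volume) (fun y => partials u y ⬝ᵥ
    a ((homothetyHomeomorph x₀ ht).symm y) *ᵥ partials u y) x₀ t
  rw [finrank_euclideanSpace_fin, smul_eq_mul] at hscale
  simp only [energy, Function.comp_apply, ← hscale, ← integral_const_mul]
  refine integral_congr_ae (.of_forall fun x => ?_)
  have hx : (homothetyHomeomorph x₀ ht).symm (AffineMap.homothety x₀ t x) = x :=
    (homothetyHomeomorph x₀ ht).symm_apply_apply x
  simp only [coe_homothetyHomeomorph, hx, partials_comp_homothety hu, Matrix.mulVec_smul,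
    dotProduct_smul, smul_dotProduct, smul_eq_mul]
  ring

lemma rayleighQuot_comp_homothety (a : EuclideanSpace ℝ (Fin N) → Matrix (Fin N) (Fin N) ℝ)
    (ht : t ≠ 0) (hu : u ∈ testFunctions Ω) :
    rayleighQuot a (homothetyHomeomorph x₀ ht ⁻¹' Ω) (u ∘ homothetyHomeomorph x₀ ht) =
      t ^ 2 * rayleighQuot (a ∘ (homothetyHomeomorph x₀ ht).symm) Ω u := by
  have hmem := comp_mem_testFunctions hu (homothetyHomeomorph x₀ ht) (contDiff_homothety x₀ t)
  have hsq : ∫ x, (u ∘ homothetyHomeomorph x₀ ht) x ^ 2 = |(t ^ N)⁻¹| * ∫ x, u x ^ 2 := by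
    simpa [coe_homothetyHomeomorph] using
      integral_comp_homothety (μ := volume) (fun x => u x ^ 2) x₀ t
  have hscale : |(t ^ N)⁻¹| ≠ 0 := abs_ne_zero.2 (inv_ne_zero (pow_ne_zero N ht))
  rw [rayleighQuot_eq_energy_div a hmem, rayleighQuot_eq_energy_div _ hu, hsq,
    energy_comp_homothety a ht hu, mul_div_assoc, mul_div_mul_left _ _ hscale]

lemma EllipticOn.mul_integral_partials_sq_le_energy (ha : ContinuousOn a Ω) {ν : ℝ} (hν : 0 ≤ ν)
    (hell : EllipticOn a ν Ω) (hu : u ∈ testFunctions Ω) (i : Fin N) :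
    ν * ∫ x, partials u x i ^ 2 ≤ energy a u := by
  rw [energy, ← integral_const_mul]
  refine integral_mono ((integrable_sq_of_mem_testFunctions
    (fderiv_apply_mem_testFunctions hu _)).const_mul ν)
    (integrable_partials_dotProduct_mulVec ha hu hu) fun x => ?_
  have hcoord : partials u x i ^ 2 ≤ partials u x ⬝ᵥ partials u x := by
    simp only [sq, dotProduct]
    exact Finset.single_le_sum (f := fun i => partials u x i * partials u x i)
      (fun j _ => mul_self_nonneg _) (Finset.mem_univ i)
  by_cases hx : x ∈ tsupport u
  · exact (mul_le_mul_of_nonneg_left hcoord hν).trans (hell x (hu.2.2 hx) _)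
  · simp [partials_eq_zero_of_notMem_tsupport hx]

end Energy

section Ellipticity

open scoped Matrix Matrix.Norms.L2Operator

variable {X : Type*} {N : ℕ} {a : X → Matrix (Fin N) (Fin N) ℝ} {ν : ℝ}

lemma dotProduct_mulVec_self_le_l2_opNorm_mul {ι : Type*} [Fintype ι] [DecidableEq ι]
    (A : Matrix ι ι ℝ) (ξ : ι → ℝ) : ξ ⬝ᵥ A *ᵥ ξ ≤ ‖A‖ * (ξ ⬝ᵥ ξ) := by
  have hinner (η : ι → ℝ) : ξ ⬝ᵥ η = inner ℝ (WithLp.toLp 2 ξ) (WithLp.toLp 2 η) := by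
    rw [EuclideanSpace.inner_toLp_toLp, star_trivial, dotProduct_comm]
  calc ξ ⬝ᵥ A *ᵥ ξ ≤ ‖WithLp.toLp 2 ξ‖ * ‖WithLp.toLp 2 (A *ᵥ ξ)‖ := by
        rw [hinner]
        exact real_inner_le_norm _ _
    _ ≤ ‖WithLp.toLp 2 ξ‖ * (‖A‖ * ‖WithLp.toLp 2 ξ‖) := by
        gcongr
        exact A.l2_opNorm_mulVec (WithLp.toLp 2 ξ)
    _ = ‖A‖ * (ξ ⬝ᵥ ξ) := by
        rw [hinner, real_inner_self_eq_norm_sq]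
        ring

theorem EllipticOn.exists_forall_dist_lt_le_mul [PseudoMetricSpace X] {D : Set X} (hD : IsCompact D)
    (ha : ContinuousOn a D) (hν : 0 < ν) (hell : EllipticOn a ν D) {κ : ℝ} (hκ : 1 < κ) :
    ∃ δ > 0, ∀ x ∈ D, ∀ y ∈ D, dist x y < δ → ∀ ξ, ξ ⬝ᵥ a x *ᵥ ξ ≤ κ * (ξ ⬝ᵥ a y *ᵥ ξ) := by
  have hunif : UniformContinuousOn a D := hD.uniformContinuousOn_of_continuous ha
  obtain ⟨δ, hδ, hclose⟩ := Metric.uniformContinuousOn_iff.1 hunif ((κ - 1) * ν)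
    (mul_pos (sub_pos.2 hκ) hν)
  refine ⟨δ, hδ, fun x hx y hy hxy ξ => ?_⟩
  have hnorm : ‖a x - a y‖ ≤ (κ - 1) * ν := by
    rw [← dist_eq_norm]
    exact (hclose x hx y hy hxy).le
  calc ξ ⬝ᵥ a x *ᵥ ξ = ξ ⬝ᵥ (a x - a y) *ᵥ ξ + ξ ⬝ᵥ a y *ᵥ ξ := by
        rw [Matrix.sub_mulVec, dotProduct_sub, sub_add_cancel]
    _ ≤ (κ - 1) * ν * (ξ ⬝ᵥ ξ) + ξ ⬝ᵥ a y *ᵥ ξ := by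
        gcongr
        exact (dotProduct_mulVec_self_le_l2_opNorm_mul _ ξ).trans
          (mul_le_mul_of_nonneg_right hnorm (Finset.sum_nonneg fun i _ => mul_self_nonneg (ξ i)))
    _ ≤ (κ - 1) * (ξ ⬝ᵥ a y *ᵥ ξ) + ξ ⬝ᵥ a y *ᵥ ξ := by
        rw [mul_assoc]
        gcongr
        exact hell y hy ξ
    _ = κ * (ξ ⬝ᵥ a y *ᵥ ξ) := by ring

end Ellipticity

section Eigenvalues

open scoped Matrix

variable {N : ℕ} {a b : EuclideanSpace ℝ (Fin N) → Matrix (Fin N) (Fin N) ℝ} {ν κ : ℝ} {k : ℕ}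
  {A B D Ω : Set (EuclideanSpace ℝ (Fin N))} {u : EuclideanSpace ℝ (Fin N) → ℝ}
  {V : Submodule ℝ (EuclideanSpace ℝ (Fin N) → ℝ)}

/-- The inner supremum of the min-max formula: the maximal Rayleigh quotient on `V`. It has
the junk value `0` when `V = ⊥` or the quotients are unbounded. -/
def maxRayleighQuot (a : EuclideanSpace ℝ (Fin N) → Matrix (Fin N) (Fin N) ℝ)
    (Ω : Set (EuclideanSpace ℝ (Fin N))) (V : Submodule ℝ (EuclideanSpace ℝ (Fin N) → ℝ)) : ℝ :=
  sSup {q : ℝ | ∃ u ∈ V, u ≠ 0 ∧ q = rayleighQuot a Ω u}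

lemma lamk_eq_sInf_maxRayleighQuot (a : EuclideanSpace ℝ (Fin N) → Matrix (Fin N) (Fin N) ℝ)
    (Ω : Set (EuclideanSpace ℝ (Fin N))) (k : ℕ) :
    lamk a Ω k = sInf {μ : ℝ | ∃ V : Submodule ℝ (EuclideanSpace ℝ (Fin N) → ℝ),
      Module.finrank ℝ V = k ∧ V ≤ testFunctions Ω ∧ μ = maxRayleighQuot a Ω V} := rfl

lemma EllipticOn.rayleighQuot_nonneg (hν : 0 ≤ ν) (hell : EllipticOn a ν Ω)
    (hu : u ∈ testFunctions Ω) : 0 ≤ rayleighQuot a Ω u := by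
  rw [rayleighQuot_eq_energy_div a hu]
  exact div_nonneg (hell.energy_nonneg hν hu) (integral_nonneg fun x => sq_nonneg _)

lemma EllipticOn.maxRayleighQuot_nonneg (hν : 0 ≤ ν) (hell : EllipticOn a ν Ω)
    (hV : V ≤ testFunctions Ω) : 0 ≤ maxRayleighQuot a Ω V := by
  refine Real.sSup_nonneg ?_
  rintro _ ⟨u, hu, -, rfl⟩
  exact hell.rayleighQuot_nonneg hν (hV hu)

lemma rayleighQuot_le_maxRayleighQuot [FiniteDimensional ℝ V] (ha : ContinuousOn a Ω)
    (hV : V ≤ testFunctions Ω) (hu : u ∈ V) (hu0 : u ≠ 0) :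
    rayleighQuot a Ω u ≤ maxRayleighQuot a Ω V := by
  let ι := Submodule.inclusion hV
  obtain ⟨C, hC⟩ := exists_forall_apply_self_le_mul_norm_sq
    (T := testFunctionsToL2 Ω volume ∘ₗ ι)
    (testFunctionsToL2_injective.comp (Submodule.inclusion_injective hV))
    ((energyForm ha).compl₁₂ ι ι)
  refine le_csSup ⟨C, ?_⟩ ⟨u, hu, hu0, rfl⟩
  rintro _ ⟨v, hv, hv0, rfl⟩
  rw [rayleighQuot_eq_energy_div a (hV hv),
    div_le_iff₀ (integral_sq_pos_of_mem_testFunctions (hV hv) hv0)]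
  have hCv := hC ⟨v, hv⟩
  rwa [LinearMap.comp_apply, norm_testFunctionsToL2_sq] at hCv

lemma EllipticOn.lamk_le_maxRayleighQuot (hν : 0 ≤ ν) (hell : EllipticOn a ν Ω)
    (hV : V ≤ testFunctions Ω) (hVk : Module.finrank ℝ V = k) :
    lamk a Ω k ≤ maxRayleighQuot a Ω V := by
  refine csInf_le ⟨0, ?_⟩ ⟨V, hVk, hV, rfl⟩
  rintro _ ⟨W, -, hW, rfl⟩
  exact hell.maxRayleighQuot_nonneg hν hW

lemma le_lamk_of_forall_le_maxRayleighQuot [NeZero N] (hΩ : IsOpen Ω) (hne : Ω.Nonempty) {c : ℝ}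
    (h : ∀ V ≤ testFunctions Ω, Module.finrank ℝ V = k → c ≤ maxRayleighQuot a Ω V) :
    c ≤ lamk a Ω k := by
  rw [lamk_eq_sInf_maxRayleighQuot]
  refine le_csInf ?_ ?_
  · obtain ⟨V, hV, hVk⟩ := exists_le_testFunctions_finrank_eq hΩ hne k
    exact ⟨_, V, hVk, hV, rfl⟩
  · rintro _ ⟨V, hVk, hV, rfl⟩
    exact h V hV hVk

theorem EllipticOn.lamk_le_mul_lamk_of_linearMap [NeZero N] (hk : 1 ≤ k) (hA : IsOpen A)
    (hne : A.Nonempty) (ha : ContinuousOn a A) (hν : 0 ≤ ν) (hell : EllipticOn b ν B) (hκ : 0 < κ)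
    {Φ : (EuclideanSpace ℝ (Fin N) → ℝ) →ₗ[ℝ] (EuclideanSpace ℝ (Fin N) → ℝ)}
    (hΦ : Function.Injective Φ)
    (hmem : ∀ u ∈ testFunctions A, Φ u ∈ testFunctions B)
    (hquot : ∀ u ∈ testFunctions A, rayleighQuot b B (Φ u) ≤ κ * rayleighQuot a A u) :
    lamk b B k ≤ κ * lamk a A k := by
  rw [← inv_mul_le_iff₀ hκ]
  refine le_lamk_of_forall_le_maxRayleighQuot hA hne fun V hV hVk => ?_
  have : FiniteDimensional ℝ V := Module.finite_of_finrank_pos (hVk.symm ▸ hk)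
  have hmap : V.map Φ ≤ testFunctions B :=
    Submodule.map_le_iff_le_comap.2 fun u hu => hmem u (hV hu)
  have hmapk : Module.finrank ℝ (V.map Φ) = k :=
    (V.equivMapOfInjective Φ hΦ).finrank_eq.symm.trans hVk
  rw [inv_mul_le_iff₀ hκ]
  refine (hell.lamk_le_maxRayleighQuot hν hmap hmapk).trans (csSup_le ?_ ?_)
  · obtain ⟨w, hw, hw0⟩ :=
      (V.map Φ).exists_mem_ne_zero_of_ne_bot (Submodule.one_le_finrank_iff.1 (hmapk.symm ▸ hk))
    exact ⟨_, w, hw, hw0, rfl⟩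
  · rintro _ ⟨_, ⟨u, hu, rfl⟩, hu0, rfl⟩
    refine (hquot u (hV hu)).trans ?_
    gcongr
    exact rayleighQuot_le_maxRayleighQuot ha hV hu fun h => hu0 (h ▸ map_zero Φ)

theorem EllipticOn.lamk_anti [NeZero N] (hk : 1 ≤ k) (hA : IsOpen A) (hne : A.Nonempty)
    (hAB : A ⊆ B) (ha : ContinuousOn a A) (hν : 0 ≤ ν) (hell : EllipticOn a ν B) :
    lamk a B k ≤ lamk a A k := by
  have h := hell.lamk_le_mul_lamk_of_linearMap hk hA hne ha hν one_pos
    (Φ := LinearMap.id) Function.injective_id (fun u hu => testFunctions_mono hAB hu)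
    fun u hu => by
      rw [one_mul, LinearMap.id_apply, rayleighQuot_eq_energy_div a hu,
        rayleighQuot_eq_energy_div a (testFunctions_mono hAB hu)]
  rwa [one_mul] at h

theorem EllipticOn.lamk_le_mul_lamk_of_preimage_homothety_subset [NeZero N] (hk : 1 ≤ k)
    (hA : IsOpen A) (hne : A.Nonempty) (ha : ContinuousOn a A) (hb : ContinuousOn b B)
    (hν : 0 ≤ ν) (hell : EllipticOn b ν B) (hκ : 0 < κ) {x₀ : EuclideanSpace ℝ (Fin N)} {t : ℝ}
    (ht : t ≠ 0) (hAB : AffineMap.homothety x₀ t ⁻¹' A ⊆ B)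
    (hform : ∀ x ∈ B, AffineMap.homothety x₀ t x ∈ A → ∀ ξ,
      ξ ⬝ᵥ b x *ᵥ ξ ≤ κ * (ξ ⬝ᵥ a (AffineMap.homothety x₀ t x) *ᵥ ξ)) :
    lamk b B k ≤ t ^ 2 * κ * lamk a A k := by
  let φ := homothetyHomeomorph x₀ ht
  have hφB : Set.MapsTo φ.symm A B := fun y hy => hAB (by
    rwa [← coe_homothetyHomeomorph x₀ ht, Set.mem_preimage, φ.apply_symm_apply])
  have hφmem (u) (hu : u ∈ testFunctions A) : u ∘ φ ∈ testFunctions (φ ⁻¹' A) :=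
    comp_mem_testFunctions hu φ (contDiff_homothety x₀ t)
  refine hell.lamk_le_mul_lamk_of_linearMap hk hA hne ha hν (by positivity)
    (Φ := LinearMap.funLeft ℝ ℝ φ) (LinearMap.funLeft_injective_of_surjective ℝ ℝ φ φ.surjective)
    (fun u hu => testFunctions_mono hAB (hφmem u hu)) fun u hu => ?_
  have henergy : energy (b ∘ φ.symm) u ≤ κ * energy a u := by
    refine energy_le_mul_energy ha (hb.comp φ.symm.continuous.continuousOn hφB)
      (fun y hy ξ => ?_) hu
    have hy' : AffineMap.homothety x₀ t (φ.symm y) = y := φ.apply_symm_apply y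
    simpa only [Function.comp_apply, hy'] using hform (φ.symm y) (hφB hy) (hy'.symm ▸ hy) ξ
  calc rayleighQuot b B (u ∘ φ) = rayleighQuot b (φ ⁻¹' A) (u ∘ φ) := by
        rw [rayleighQuot_eq_energy_div b (hφmem u hu),
          rayleighQuot_eq_energy_div b (testFunctions_mono hAB (hφmem u hu))]
    _ = t ^ 2 * (energy (b ∘ φ.symm) u / ∫ x, u x ^ 2) := by
        rw [rayleighQuot_comp_homothety b ht hu, rayleighQuot_eq_energy_div _ hu]
    _ ≤ t ^ 2 * (κ * energy a u / ∫ x, u x ^ 2) := by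
        gcongr
    _ = t ^ 2 * κ * rayleighQuot a A u := by
        rw [rayleighQuot_eq_energy_div a hu]
        ring

lemma EllipticOn.le_rayleighQuot (ha : ContinuousOn a Ω) (hν : 0 ≤ ν) (hell : EllipticOn a ν Ω)
    {R : ℝ} (hR : 0 < R) {i : Fin N} (hΩR : ∀ x ∈ Ω, |x i| ≤ R) (hu : u ∈ testFunctions Ω)
    (hu0 : u ≠ 0) : ν / (4 * R ^ 2) ≤ rayleighQuot a Ω u := by
  have hpoincare : ∫ x, u x ^ 2 ≤ 4 * R ^ 2 * ∫ x, partials u x i ^ 2 :=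
    integral_sq_le_integral_fderiv_sq (μ := volume) (ℓ := EuclideanSpace.proj i) hu (by simp) hΩR
  rw [rayleighQuot_eq_energy_div a hu, le_div_iff₀ (integral_sq_pos_of_mem_testFunctions hu hu0)]
  calc ν / (4 * R ^ 2) * ∫ x, u x ^ 2
      ≤ ν / (4 * R ^ 2) * (4 * R ^ 2 * ∫ x, partials u x i ^ 2) := by gcongr
    _ = ν * ∫ x, partials u x i ^ 2 := by field_simp
    _ ≤ energy a u := hell.mul_integral_partials_sq_le_energy ha hν hu i

theorem EllipticOn.le_lamk (hk : 1 ≤ k) (hΩ : IsOpen Ω) (hne : Ω.Nonempty)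
    (ha : ContinuousOn a Ω) (hν : 0 ≤ ν) (hell : EllipticOn a ν Ω) {R : ℝ} (hR : 0 < R) {i : Fin N}
    (hΩR : ∀ x ∈ Ω, |x i| ≤ R) : ν / (4 * R ^ 2) ≤ lamk a Ω k := by
  have : NeZero N := ⟨by rintro rfl; exact i.elim0⟩
  refine le_lamk_of_forall_le_maxRayleighQuot hΩ hne fun V hV hVk => ?_
  have : FiniteDimensional ℝ V := Module.finite_of_finrank_pos (hVk.symm ▸ hk)
  obtain ⟨u, hu, hu0⟩ :=
    V.exists_mem_ne_zero_of_ne_bot (Submodule.one_le_finrank_iff.1 (hVk.symm ▸ hk))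
  exact (hell.le_rayleighQuot ha hν hR hΩR (hV hu) hu0).trans
    (rayleighQuot_le_maxRayleighQuot ha hV hu hu0)

end Eigenvalues

lemma tendsto_of_forall_eventually_le_mul {α : Type*} {F : Filter α} {f : α → ℝ} {l : ℝ}
    (h : ∀ κ > 1, ∀ᶠ n in F, f n ≤ κ * l ∧ l ≤ κ * f n) : Tendsto f F (𝓝 l) := by
  have hmul (c : ℝ) : Tendsto (fun κ : ℝ => κ * c) (𝓝[>] 1) (𝓝 c) := by
    simpa using ((continuous_mul_const c).tendsto 1).mono_left nhdsWithin_le_nhds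
  refine tendsto_order.2 ⟨fun c hc => ?_, fun c hc => ?_⟩
  · obtain ⟨κ, hκc, hκ : 1 < κ⟩ :=
      (((hmul c).eventually_lt_const hc).and self_mem_nhdsWithin).exists
    filter_upwards [h κ hκ] with n hn
    exact lt_of_mul_lt_mul_left (hκc.trans_le hn.2) (by positivity)
  · obtain ⟨κ, hκc, hκ : 1 < κ⟩ :=
      (((hmul l).eventually_lt_const hc).and self_mem_nhdsWithin).exists
    filter_upwards [h κ hκ] with n hn
    exact hn.1.trans_lt hκc

section Domains

open scoped Matrix

variable {N : ℕ} [NeZero N] {a : EuclideanSpace ℝ (Fin N) → Matrix (Fin N) (Fin N) ℝ} {ν : ℝ}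
  {k : ℕ} {D : Set (EuclideanSpace ℝ (Fin N))}

theorem EllipticOn.exists_pos_le_lamk (hk : 1 ≤ k) (hD : Bornology.IsBounded D)
    (ha : ContinuousOn a D) (hν : 0 < ν) (hell : EllipticOn a ν D) :
    ∃ c > 0, ∀ Ω ⊆ D, IsOpen Ω → Ω.Nonempty → c ≤ lamk a Ω k := by
  obtain ⟨R, hR, hDR⟩ := hD.exists_pos_norm_le
  exact ⟨ν / (4 * R ^ 2), by positivity, fun Ω hΩD hΩ hne =>
    (hell.mono hΩD).le_lamk hk hΩ hne (ha.mono hΩD) hν.le hR (i := 0) fun x hx =>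
      (PiLp.norm_apply_le x 0).trans (hDR x (hΩD hx))⟩

theorem EllipticOn.exists_lamk_le (hk : 1 ≤ k) (hD : IsCompact D) (ha : ContinuousOn a D)
    (hν : 0 ≤ ν) (hell : EllipticOn a ν D) {m : ENNReal} (hm : m ≠ 0) :
    ∃ C, ∀ Ω ⊆ D, IsOpen Ω → Convex ℝ Ω → m ≤ volume Ω → lamk a Ω k ≤ C := by
  obtain ⟨F, hF, hFpos, hball⟩ := exists_finite_balls_of_isCompact volume hm hD
  obtain ⟨C, hC⟩ := (hF.image fun p => lamk a (ball p.1 p.2) k).bddAbove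
  refine ⟨C, fun Ω hΩD hΩ hconv hmΩ => ?_⟩
  obtain ⟨p, hp, hpΩ⟩ := hball Ω hΩD hΩ hconv hmΩ
  exact ((hell.mono hΩD).lamk_anti hk isOpen_ball (nonempty_ball.2 (hFpos p hp)) hpΩ
    (ha.mono (hpΩ.trans hΩD)) hν).trans (hC ⟨p, hp, rfl⟩)

theorem EllipticOn.exists_forall_lamk_le_mul_lamk (hk : 1 ≤ k) (hD : IsCompact D)
    (ha : ContinuousOn a D) (hν : 0 < ν) (hell : EllipticOn a ν D) {κ : ℝ} (hκ : 1 < κ) :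
    ∃ δ > 0, ∀ A ⊆ D, ∀ B ⊆ D, IsOpen A → A.Nonempty → Convex ℝ B → ∀ x₀, ∀ r > 0,
      ball x₀ r ⊆ B → A ⊆ thickening (δ * r) B → lamk a B k ≤ κ * lamk a A k := by
  obtain ⟨κ', hκ', hκκ'⟩ := exists_between hκ
  obtain ⟨η, hη, hform⟩ := hell.exists_forall_dist_lt_le_mul hD ha hν hκ'
  have hratio : ∀ᶠ δ in 𝓝[>] (0 : ℝ), (1 + δ) ^ 2 * κ' < κ :=
    (by fun_prop : Continuous fun δ : ℝ => (1 + δ) ^ 2 * κ').continuousWithinAt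
      |>.eventually_lt_const (by simpa using hκκ')
  have hmove : ∀ᶠ δ in 𝓝[>] (0 : ℝ), δ * diam D < η :=
    ((continuous_mul_const (diam D)).continuousWithinAt).eventually_lt_const (by simpa using hη)
  obtain ⟨δ, hδκ, hδη, hδ : 0 < δ⟩ := (hratio.and (hmove.and self_mem_nhdsWithin)).exists
  refine ⟨δ, hδ, fun A hAD B hBD hA hne hB x₀ r hr hball hAB => ?_⟩
  have hx₀ : x₀ ∈ D := hBD (hball (mem_ball_self hr))
  have hdist (x) (hx : x ∈ D) : dist x (AffineMap.homothety x₀ (1 + δ) x) < η := by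
    refine lt_of_le_of_lt ?_ hδη
    rw [dist_self_homothety, sub_add_cancel_left, norm_neg, Real.norm_of_nonneg hδ.le]
    gcongr
    exact dist_le_diam_of_mem hD.isBounded hx₀ hx
  obtain ⟨c, hc, hcA⟩ := hell.exists_pos_le_lamk hk hD.isBounded ha hν
  have hpos : 0 ≤ lamk a A k := hc.le.trans (hcA A hAD hA hne)
  calc lamk a B k ≤ (1 + δ) ^ 2 * κ' * lamk a A k :=
        (hell.mono hBD).lamk_le_mul_lamk_of_preimage_homothety_subset hk hA hne (ha.mono hAD)
          (ha.mono hBD) hν.le (by positivity) (by positivity)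
          (preimage_homothety_subset hB hδ hball hAB)
          fun x hx hxA => hform x (hBD hx) _ (hAD hxA) (hdist x (hBD hx))
    _ ≤ κ * lamk a A k := by gcongr

theorem EllipticOn.tendsto_lamk (hk : 1 ≤ k) (hD : IsCompact D) (ha : ContinuousOn a D)
    (hν : 0 < ν) (hell : EllipticOn a ν D) {Ω : ℕ → Set (EuclideanSpace ℝ (Fin N))}
    {L : Set (EuclideanSpace ℝ (Fin N))} (hΩ : ∀ n, Ω n ⊆ D ∧ IsOpen (Ω n) ∧ Convex ℝ (Ω n))
    (hLD : L ⊆ D) (hL : IsOpen L) (hLconv : Convex ℝ L) (hLne : L.Nonempty)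
    (hlim : UnifConvTo Ω L) : Tendsto (fun n => lamk a (Ω n) k) atTop (𝓝 (lamk a L k)) := by
  refine tendsto_of_forall_eventually_le_mul fun κ hκ => ?_
  obtain ⟨δ, hδ, hcompare⟩ := hell.exists_forall_lamk_le_mul_lamk hk hD ha hν hκ
  obtain ⟨x₀, hx₀⟩ := hLne
  obtain ⟨s, hs, hsL⟩ := isOpen_iff.1 hL x₀ hx₀
  obtain ⟨r, hr, rfl⟩ : ∃ r > 0, s = r + r := ⟨s / 2, half_pos hs, (add_halves s).symm⟩
  filter_upwards [hlim r hr, hlim (δ * r) (mul_pos hδ hr)] with n hnear hclose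
  obtain ⟨hnD, hn, hnconv⟩ := hΩ n
  have hball : ball x₀ r ⊆ Ω n :=
    ball_subset_of_ball_subset_thickening hn hnconv hr (hsL.trans hnear.2)
  have hballL : ball x₀ r ⊆ L := (ball_subset_ball (by linarith)).trans hsL
  exact ⟨hcompare L hLD (Ω n) hnD hL ⟨x₀, hx₀⟩ hnconv x₀ r hr hball hclose.2,
    hcompare (Ω n) hnD L hLD hn ⟨x₀, hball (mem_ball_self hr)⟩ hLconv x₀ r hr hballL hclose.1⟩

end Domains

theorem eigenvalue_bounded_continuous_var_coeff_general {N : ℕ} (hN : 1 ≤ N)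
    {D : Set (EuclideanSpace ℝ (Fin N))} (hD : IsCompact D) {m : ENNReal} (hm : m ≠ 0)
    {a : EuclideanSpace ℝ (Fin N) → Matrix (Fin N) (Fin N) ℝ}
    (ha_cont : ∀ i j, ContinuousOn (fun x => a x i j) D)
    (ha_pos : ∃ ν : ℝ, 0 < ν ∧ ∀ x ∈ D, ∀ ξ : Fin N → ℝ,
      ν * ∑ i, ξ i ^ 2 ≤ ∑ i, ∑ j, a x i j * ξ i * ξ j)
    {k : ℕ} (hk : 1 ≤ k) :
    (∃ c C : ℝ, 0 < c ∧ c ≤ C ∧ ∀ Ω ⊆ D, IsOpen Ω → Convex ℝ Ω → m ≤ volume Ω →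
      c ≤ lamk a Ω k ∧ lamk a Ω k ≤ C) ∧
    (∀ (Ωn : ℕ → Set (EuclideanSpace ℝ (Fin N))) (L : Set (EuclideanSpace ℝ (Fin N))),
      (∀ n, Ωn n ⊆ D ∧ IsOpen (Ωn n) ∧ Convex ℝ (Ωn n)) →
      L ⊆ D → IsOpen L → Convex ℝ L → L.Nonempty → UnifConvTo Ωn L →
      Tendsto (fun n => lamk a (Ωn n) k) atTop (𝓝 (lamk a L k))) := by
  have : NeZero N := ⟨by omega⟩
  obtain ⟨ν, hν, hpos⟩ := ha_pos
  have ha : ContinuousOn a D := continuousOn_pi.2 fun i => continuousOn_pi.2 (ha_cont i)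
  have hell : EllipticOn a ν D := fun x hx ξ => by
    rw [dotProduct_mulVec_self_eq_sum]
    simpa only [dotProduct, ← sq] using hpos x hx ξ
  obtain ⟨c, hc, hlower⟩ := hell.exists_pos_le_lamk hk hD.isBounded ha hν
  obtain ⟨C, hupper⟩ := hell.exists_lamk_le hk hD ha hν.le hm
  refine ⟨⟨c, max c C, hc, le_max_left c C, fun Ω hΩD hΩ hconv hmΩ => ⟨?_, ?_⟩⟩, ?_⟩
  · exact hlower Ω hΩD hΩ (nonempty_of_measure_ne_zero (hm.bot_lt.trans_le hmΩ).ne')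
  · exact (hupper Ω hΩD hΩ hconv hmΩ).trans (le_max_right c C)
  · intro Ωn L hΩn hLD hL hLconv hLne hlim
    exact hell.tendsto_lamk hk hD ha hν hΩn hLD hL hLconv hLne hlim

/-- The `k`-th Dirichlet eigenvalue of a second-order elliptic operator with continuous
non-constant coefficients is bounded and continuous on `C_m(D)` for the uniform
convergence. -/
theorem eigenvalue_bounded_continuous_var_coeff {N : ℕ} (hN : 2 ≤ N)
    (D : Set (EuclideanSpace ℝ (Fin N))) (hD : IsCompact D)
    (m : ℝ) (hm : 0 < m) (hne : ∃ Ω, InCm D m Ω)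
    (a : EuclideanSpace ℝ (Fin N) → Matrix (Fin N) (Fin N) ℝ)
    (ha_cont : ∀ i j, ContinuousOn (fun x => a x i j) D)
    (ha_symm : ∀ x ∈ D, ∀ i j, a x i j = a x j i)
    (ha_pos : ∃ ν : ℝ, 0 < ν ∧ ∀ x ∈ D, ∀ ξ : Fin N → ℝ,
      ν * ∑ i, ξ i ^ 2 ≤ ∑ i, ∑ j, a x i j * ξ i * ξ j)
    (k : ℕ) (hk : 1 ≤ k) :
    (∃ c C : ℝ, 0 < c ∧ c ≤ C ∧ ∀ Ω, InCm D m Ω → c ≤ lamk a Ω k ∧ lamk a Ω k ≤ C) ∧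
    (∀ (Ωn : ℕ → Set (EuclideanSpace ℝ (Fin N))) (L : Set (EuclideanSpace ℝ (Fin N))),
      (∀ n, InCm D m (Ωn n)) → InCm D m L → UnifConvTo Ωn L →
      Filter.Tendsto (fun n => lamk a (Ωn n) k) Filter.atTop (nhds (lamk a L k))) := by
  have hm' : ENNReal.ofReal m ≠ 0 := (ENNReal.ofReal_pos.2 hm).ne'
  obtain ⟨⟨c, C, hc, hcC, hbound⟩, hlim⟩ := eigenvalue_bounded_continuous_var_coeff_general
    (by omega) hD hm' ha_cont ha_pos hk
  exact ⟨⟨c, C, hc, hcC, fun Ω ⟨hΩD, hΩ, hconv, hmΩ⟩ => hbound Ω hΩD hΩ hconv hmΩ.ge⟩,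
    fun Ωn L hΩn ⟨hLD, hL, hLconv, hmL⟩ => hlim Ωn L
      (fun n => ⟨(hΩn n).1, (hΩn n).2.1, (hΩn n).2.2.1⟩) hLD hL hLconv
      (nonempty_of_measure_ne_zero (hmL.trans_ne hm'))⟩
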